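/- Let > be a control order on the monomials of A' = K[x₁,…,xₙ,t₁,…,t_s] whose local variables are exactly t₁,…,t_s (so x₁,…,xₙ are global), with multiplicative set S' := {1+g : g = 0 or lt(g) < 1} ⊆ A'. Let I' = Q̃₁ ∩ … ∩ Q̃_k be a minimal primary decomposition of I' in A', numbered so that Q̃_i + ⟨t₁,…,t_s⟩ ≠ A' exactly for i = 1,…,m. Then β(I,J) = φ((S'⁻¹I')^c) = φ(Q̃₁) ∩ … ∩ φ(Q̃_m), and the latter expression is a minimal primary decomposition of β(I,J) in A. -/

import Mathlib

open scoped Classical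

noncomputable section

/-- A semigroup order on monomials: a strict total order on exponent vectors (written
additively; the monomial `1` corresponds to `0`) compatible with multiplication. -/
def IsSemigroupOrder {σ : Type*} (lt : (σ →₀ ℕ) → (σ →₀ ℕ) → Prop) : Prop :=
  IsStrictTotalOrder (σ →₀ ℕ) lt ∧ ∀ a b c : σ →₀ ℕ, lt a b → lt (c + a) (c + b)

/-- The variable `i` is local for the order `lt`, i.e. `x_i < 1`. -/
def IsLocalVar {σ : Type*} (lt : (σ →₀ ℕ) → (σ →₀ ℕ) → Prop) (i : σ) : Prop :=
  lt (Finsupp.single i 1) 0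

/-- A control order: a semigroup order under which every monomial divisible by a local
variable is `< 1`. -/
def IsControlOrder {σ : Type*} (lt : (σ →₀ ℕ) → (σ →₀ ℕ) → Prop) : Prop :=
  IsSemigroupOrder lt ∧ ∀ m : σ →₀ ℕ, (∃ i, IsLocalVar lt i ∧ m i ≠ 0) → lt m 0

/-- `m` is the leading monomial of `g` w.r.t. `lt`. -/
def IsLeadingMonomial {K : Type*} [CommSemiring K] {σ : Type*}
    (lt : (σ →₀ ℕ) → (σ →₀ ℕ) → Prop) (g : MvPolynomial σ K) (m : σ →₀ ℕ) : Prop :=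
  m ∈ g.support ∧ ∀ m' ∈ g.support, m' ≠ m → lt m' m

/-- The multiplicative set `S = {1 + g : g = 0 or lt(g) < 1}`. -/
def SDen (K : Type*) [CommSemiring K] {σ : Type*}
    (lt : (σ →₀ ℕ) → (σ →₀ ℕ) → Prop) : Set (MvPolynomial σ K) :=
  {f | ∃ g : MvPolynomial σ K, f = 1 + g ∧
    (g = 0 ∨ ∃ m, IsLeadingMonomial lt g m ∧ lt m 0)}

/-- `I = ⋂ i ∈ s, Q i` is a minimal primary decomposition: every `Q i` is primary, the
radicals are pairwise distinct, and no component contains the intersection of the others. -/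
def MinPrimDecOn {R : Type*} [CommRing R] {ι : Type*} (I : Ideal R) (Q : ι → Ideal R)
    (s : Finset ι) : Prop :=
  I = ⨅ i ∈ s, Q i ∧ (∀ i ∈ s, (Q i).IsPrimary) ∧
    (∀ i ∈ s, ∀ j ∈ s, (Q i).radical = (Q j).radical → i = j) ∧
    ∀ i ∈ s, ¬ (⨅ j ∈ s.erase i, Q j) ≤ Q i

/-- The extraction determined by the decomposition `Q` (over `s`) and the ideal `J`:
the intersection of those components `Q i` with `Q i + J ≠ A` (which is `⊤` = the whole
ring when there are no such components). -/
def extractionFrom {R : Type*} [CommRing R] {ι : Type*} (J : Ideal R) (Q : ι → Ideal R)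
    (s : Finset ι) : Ideal R :=
  ⨅ i ∈ s.filter (fun i => Q i ⊔ J ≠ ⊤), Q i

/-- `B` is the extraction `β(I,J)` of `I` by `J`. -/
def IsExtraction {R : Type*} [CommRing R] (I J B : Ideal R) : Prop :=
  ∃ (k : ℕ) (Q : Fin k → Ideal R), MinPrimDecOn I Q Finset.univ ∧
    B = extractionFrom J Q Finset.univ

/-- `t ⊆ s` determines an isolated set of primes of the decomposition `Q` over `s`. -/
def IsIsolatedOn {R : Type*} [CommRing R] {ι : Type*} (Q : ι → Ideal R)
    (s t : Finset ι) : Prop :=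
  t ⊆ s ∧ ∀ j ∈ s, (∃ i ∈ t, (Q j).radical ≤ (Q i).radical) → j ∈ t

/-- The lifted ideal `W' = ⟨W, t₁ - g₁, …, t_s - g_s⟩ ⊆ A' = K[x₁,…,xₙ,t₁,…,t_s]`. -/
def liftIdeal {K : Type*} [CommRing K] {n s : ℕ} (g : Fin s → MvPolynomial (Fin n) K)
    (W : Ideal (MvPolynomial (Fin n) K)) : Ideal (MvPolynomial (Fin n ⊕ Fin s) K) :=
  W.map (MvPolynomial.rename (Sum.inl : Fin n → Fin n ⊕ Fin s)).toRingHom ⊔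
    Ideal.span (Set.range fun w : Fin s =>
      (MvPolynomial.X (Sum.inr w) : MvPolynomial (Fin n ⊕ Fin s) K) -
        MvPolynomial.rename (Sum.inl : Fin n → Fin n ⊕ Fin s) (g w))

/-- The substitution homomorphism `φ : A' → A`, fixing each `x_i` and sending `t_w ↦ g_w`. -/
def substHom {K : Type*} [CommRing K] {n s : ℕ} (g : Fin s → MvPolynomial (Fin n) K) :
    MvPolynomial (Fin n ⊕ Fin s) K →ₐ[K] MvPolynomial (Fin n) K :=
  MvPolynomial.aeval (Sum.elim MvPolynomial.X g)

/-! An ideal `Q` is disjoint from `1 + J` exactly when `Q + J ≠ A`, so contracting `I` from the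
localization at `1 + J` keeps the primary components with `Q + J ≠ A` and discards the others. Hence
`β(I,J)` is this contraction and does not depend on the chosen decomposition. For a control order
with local variables `t`, a monomial is `< 1` iff it is divisible by some `t_w`, so `S' = 1 + ⟨t⟩`
and `(S'⁻¹I')^c = β(I', ⟨t⟩)`. Finally `I' = φ⁻¹(I)` with `φ` surjective and `φ(⟨t⟩) = J`, and both
minimal primary decompositions and extractions correspond under `φ⁻¹`. -/

section OneAdd

variable {R : Type*} [CommRing R]

/-- The multiplicative set `1 + J`, encoded as the preimage of `1` in `R ⧸ J`; localizing at it
computes the extraction by `J`. -/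
def oneAddSubmonoid (J : Ideal R) : Submonoid R :=
  (⊥ : Submonoid (R ⧸ J)).comap (Ideal.Quotient.mk J)

lemma mem_oneAddSubmonoid {J : Ideal R} {f : R} : f ∈ oneAddSubmonoid J ↔ f - 1 ∈ J := by
  rw [oneAddSubmonoid, Submonoid.mem_comap, Submonoid.mem_bot,
    Ideal.Quotient.mk_eq_one_iff_sub_mem]

lemma disjoint_oneAddSubmonoid_iff (J Q : Ideal R) :
    Disjoint (oneAddSubmonoid J : Set R) Q ↔ Q ⊔ J ≠ ⊤ := by
  rw [← not_iff_not, not_ne_iff, Set.not_disjoint_iff, ← Ideal.isCoprime_iff_sup_eq,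
    Ideal.isCoprime_iff_exists]
  constructor
  · rintro ⟨f, hf, hfQ⟩
    exact ⟨f, hfQ, 1 - f, by simpa using J.neg_mem (mem_oneAddSubmonoid.1 hf), by ring⟩
  · rintro ⟨q, hq, j, hj, hqj⟩
    refine ⟨q, mem_oneAddSubmonoid.2 ?_, hq⟩
    simpa [← hqj] using hj

lemma comap_map_localization_eq_ite {Q : Ideal R} (hQ : Q.IsPrimary) (J : Ideal R) :
    (Q.map (algebraMap R (Localization (oneAddSubmonoid J)))).comap
        (algebraMap R (Localization (oneAddSubmonoid J))) = if Q ⊔ J ≠ ⊤ then Q else ⊤ := by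
  have hdisj := disjoint_oneAddSubmonoid_iff J Q
  split_ifs with hQJ
  · exact IsLocalization.under_map_of_isPrimary_disjoint _ _ hQ (hdisj.2 hQJ)
  · rw [Ideal.comap_eq_top_iff]
    by_contra hmap
    exact hQJ (hdisj.1 ((IsLocalization.map_algebraMap_ne_top_iff_disjoint _ _ Q).1 hmap))

lemma extractionFrom_eq_comap_map_localization {ι : Type*} (J : Ideal R) {Q : ι → Ideal R}
    {s : Finset ι} (hQ : ∀ i ∈ s, (Q i).IsPrimary) :
    extractionFrom J Q s =
      ((⨅ i ∈ s, Q i).map (algebraMap R (Localization (oneAddSubmonoid J)))).comap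
        (algebraMap R (Localization (oneAddSubmonoid J))) := by
  rw [extractionFrom, ← Finset.inf_eq_iInf s,
    ← IsLocalization.mapFrameHom_apply (oneAddSubmonoid J), map_finset_inf, Ideal.comap_finsetInf]
  simp only [Function.comp_def, IsLocalization.mapFrameHom_apply]
  rw [Finset.inf_congr rfl fun i hi => comap_map_localization_eq_ite (hQ i hi) J,
    Finset.inf_ite, Finset.inf_top, inf_top_eq, Finset.inf_eq_iInf]

lemma extractionFrom_eq_extractionFrom {ι κ : Type*} (J : Ideal R) {P : ι → Ideal R}
    {Q : κ → Ideal R} {s : Finset ι} {t : Finset κ} (hP : ∀ i ∈ s, (P i).IsPrimary)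
    (hQ : ∀ j ∈ t, (Q j).IsPrimary) (hPQ : ⨅ i ∈ s, P i = ⨅ j ∈ t, Q j) :
    extractionFrom J P s = extractionFrom J Q t := by
  rw [extractionFrom_eq_comap_map_localization J hP,
    extractionFrom_eq_comap_map_localization J hQ, hPQ]

end OneAdd

lemma MinPrimDecOn.mono {R ι : Type*} [CommRing R] {I : Ideal R} {Q : ι → Ideal R}
    {s t : Finset ι} (hQ : MinPrimDecOn I Q s) (hts : t ⊆ s) :
    MinPrimDecOn (⨅ i ∈ t, Q i) Q t := by
  obtain ⟨-, hprim, hrad, hirred⟩ := hQ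
  refine ⟨rfl, fun i hi => hprim i (hts hi),
    fun i hi j hj => hrad i (hts hi) j (hts hj), fun i hi hle => hirred i (hts hi) ?_⟩
  exact (biInf_mono fun j hj => Finset.erase_subset_erase i hts hj).trans hle

section Surjective

variable {R S F ι : Type*} [CommRing R] [CommRing S] [FunLike F R S] [RingHomClass F R S]
  {φ : F}

lemma isPrimary_of_isPrimary_comap (hφ : Function.Surjective φ) {P : Ideal S}
    (hP : (P.comap φ).IsPrimary) : P.IsPrimary := by
  rw [Ideal.isPrimary_iff] at hP ⊢
  refine ⟨fun h => hP.1 (by rw [h, Ideal.comap_top]), fun {x y} hxy => ?_⟩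
  obtain ⟨a, rfl⟩ := hφ x
  obtain ⟨b, rfl⟩ := hφ y
  have hab : a * b ∈ P.comap φ := by rwa [Ideal.mem_comap, map_mul]
  have := hP.2 hab
  rwa [← Ideal.comap_radical] at this

lemma MinPrimDecOn.of_comap (hφ : Function.Surjective φ) {I : Ideal S} {P : ι → Ideal S}
    {s : Finset ι} (h : MinPrimDecOn (I.comap φ) (fun i => (P i).comap φ) s) :
    MinPrimDecOn I P s := by
  obtain ⟨hinf, hprim, hrad, hirred⟩ := h
  refine ⟨Ideal.comap_injective_of_surjective φ hφ ?_,
    fun i hi => isPrimary_of_isPrimary_comap hφ (hprim i hi),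
    fun i hi j hj hij => hrad i hi j hj ?_, fun i hi hle => hirred i hi ?_⟩
  · simpa only [Ideal.comap_iInf] using hinf
  · rw [← Ideal.comap_radical, ← Ideal.comap_radical, hij]
  · simpa only [Ideal.comap_iInf] using Ideal.comap_mono (f := φ) hle

lemma MinPrimDecOn.comap_map_eq_self (hφ : Function.Surjective φ) {I : Ideal S} {Q : ι → Ideal R}
    {s : Finset ι} (hQ : MinPrimDecOn (I.comap φ) Q s) {i : ι} (hi : i ∈ s) :
    ((Q i).map φ).comap φ = Q i := by
  have hker : RingHom.ker φ ≤ Q i :=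
    (Ideal.ker_le_comap φ).trans (hQ.1.le.trans (iInf₂_le i hi))
  rw [Ideal.comap_map_of_surjective' φ hφ, sup_eq_left.2 hker]

lemma comap_sup_eq_top_iff (hφ : Function.Surjective φ) (P : Ideal S) (T : Ideal R) :
    P.comap φ ⊔ T = ⊤ ↔ P ⊔ T.map φ = ⊤ := by
  have hmap : P ⊔ T.map φ = (P.comap φ ⊔ T).map φ := by
    rw [Ideal.map_sup, Ideal.map_comap_of_surjective φ hφ]
  have hker : RingHom.ker φ ≤ P.comap φ ⊔ T := (Ideal.ker_le_comap φ).trans le_sup_left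
  rw [hmap, ← Ideal.comap_eq_top_iff (f := φ), Ideal.comap_map_of_surjective' φ hφ,
    sup_eq_left.2 hker]

lemma extractionFrom_comap (hφ : Function.Surjective φ) (T : Ideal R) (P : ι → Ideal S)
    (s : Finset ι) :
    extractionFrom T (fun i => (P i).comap φ) s =
      (extractionFrom (T.map φ) P s).comap φ := by
  simp only [extractionFrom, Ideal.comap_iInf, ne_eq, comap_sup_eq_top_iff hφ]

lemma comap_map_localization_comap (hφ : Function.Surjective φ) (T : Ideal R) {P : ι → Ideal S}
    {s : Finset ι} (hP : ∀ i ∈ s, (P i).IsPrimary) :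
    (((⨅ i ∈ s, P i).comap φ).map (algebraMap R (Localization (oneAddSubmonoid T)))).comap
        (algebraMap R (Localization (oneAddSubmonoid T))) =
      (extractionFrom (T.map φ) P s).comap φ := by
  have hcomap : ∀ i ∈ s, ((P i).comap φ).IsPrimary := fun i hi => (hP i hi).comap (φ : R →+* S)
  rw [← extractionFrom_comap hφ, extractionFrom_eq_comap_map_localization T hcomap]
  simp only [Ideal.comap_iInf]

end Surjective

lemma exists_mem_forall_ne_rel {α : Type*} (r : α → α → Prop) [IsStrictTotalOrder α r]
    {s : Finset α} (hs : s.Nonempty) : ∃ a ∈ s, ∀ b ∈ s, b ≠ a → r b a := by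
  let _ := linearOrderOfSTO r
  obtain ⟨a, ha, hmax⟩ := s.exists_max_image id hs
  exact ⟨a, ha, fun b hb hne => lt_of_le_of_ne (hmax b hb) hne⟩

section MonomialOrder

variable {σ : Type*} {lt : (σ →₀ ℕ) → (σ →₀ ℕ) → Prop}

lemma IsSemigroupOrder.lt_zero_or_lt_zero_of_add (h : IsSemigroupOrder lt) {a b : σ →₀ ℕ}
    (hab : lt (a + b) 0) : lt a 0 ∨ lt b 0 := by
  have := h.1
  rcases trichotomous_of lt b 0 with hb | rfl | hb
  · exact Or.inr hb
  · exact Or.inl (by simpa using hab)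
  · have ha : lt a (a + b) := by simpa using h.2 0 b a hb
    exact Or.inl (trans_of lt ha hab)

lemma IsSemigroupOrder.exists_isLocalVar_of_lt_zero (h : IsSemigroupOrder lt) {m : σ →₀ ℕ}
    (hm : lt m 0) : ∃ i, IsLocalVar lt i ∧ m i ≠ 0 := by
  have := h.1
  induction m using Finsupp.induction_linear with
  | zero => exact absurd hm (irrefl_of lt 0)
  | add p q hp hq =>
    rcases h.lt_zero_or_lt_zero_of_add hm with hlt | hlt
    · obtain ⟨i, hi, hpi⟩ := hp hlt
      exact ⟨i, hi, by simp [hpi]⟩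
    · obtain ⟨i, hi, hqi⟩ := hq hlt
      exact ⟨i, hi, by simp [hqi]⟩
  | single i k =>
    induction k with
    | zero => exact absurd hm (by simpa using irrefl_of lt 0)
    | succ k ih =>
      refine ⟨i, ?_, by simp⟩
      rw [Finsupp.single_add] at hm
      rcases h.lt_zero_or_lt_zero_of_add hm with hlt | hlt
      · obtain ⟨j, hj, hji⟩ := ih hlt
        rwa [(Finsupp.single_apply_ne_zero.1 hji).1] at hj
      · exact hlt

lemma IsControlOrder.lt_zero_iff (h : IsControlOrder lt) {m : σ →₀ ℕ} :
    lt m 0 ↔ ∃ i, IsLocalVar lt i ∧ m i ≠ 0 :=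
  ⟨h.1.exists_isLocalVar_of_lt_zero, h.2 m⟩

lemma eq_zero_or_leadingMonomial_lt_zero_iff {K : Type*} [CommSemiring K]
    [IsStrictTotalOrder (σ →₀ ℕ) lt] {g : MvPolynomial σ K} :
    (g = 0 ∨ ∃ m, IsLeadingMonomial lt g m ∧ lt m 0) ↔ ∀ m ∈ g.support, lt m 0 := by
  constructor
  · rintro (rfl | ⟨m, ⟨-, hmax⟩, hm⟩) m' hm'
    · simp at hm'
    · rcases eq_or_ne m' m with rfl | hne
      · exact hm
      · exact trans_of lt (hmax m' hm' hne) hm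
  · intro hlt
    rcases eq_or_ne g 0 with hg | hg
    · exact Or.inl hg
    · obtain ⟨m, hm⟩ := exists_mem_forall_ne_rel lt (MvPolynomial.support_nonempty.2 hg)
      exact Or.inr ⟨m, hm, hlt m hm.1⟩

lemma mem_SDen_iff {K : Type*} [CommRing K] [IsStrictTotalOrder (σ →₀ ℕ) lt]
    {f : MvPolynomial σ K} : f ∈ SDen K lt ↔ ∀ m ∈ (f - 1).support, lt m 0 := by
  have hsub (g : MvPolynomial σ K) : f = 1 + g ↔ g = f - 1 := by
    rw [eq_sub_iff_add_eq', eq_comm]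
  simp only [SDen, Set.mem_ofPred_eq, eq_zero_or_leadingMonomial_lt_zero_iff, hsub,
    exists_eq_left]

lemma IsControlOrder.eq_oneAddSubmonoid {K : Type*} [CommRing K] (h : IsControlOrder lt)
    {S : Submonoid (MvPolynomial σ K)} (hS : (S : Set (MvPolynomial σ K)) = SDen K lt) :
    S = oneAddSubmonoid (Ideal.span (MvPolynomial.X '' {i | IsLocalVar lt i})) := by
  have := h.1.1
  ext f
  rw [← SetLike.mem_coe, hS, mem_SDen_iff, mem_oneAddSubmonoid,
    MvPolynomial.mem_ideal_span_X_image]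
  simp only [h.lt_zero_iff, Set.mem_ofPred_eq]

end MonomialOrder

section SubstHom

variable {K : Type*} [CommRing K] {n s : ℕ} (g : Fin s → MvPolynomial (Fin n) K)

lemma substHom_rename_inl (f : MvPolynomial (Fin n) K) :
    substHom g (MvPolynomial.rename Sum.inl f) = f := by
  rw [substHom, MvPolynomial.aeval_rename, Sum.elim_comp_inl, MvPolynomial.aeval_X_left_apply]

lemma substHom_X_inr (w : Fin s) : substHom g (MvPolynomial.X (Sum.inr w)) = g w := by
  simp [substHom]

lemma substHom_surjective : Function.Surjective (substHom g) :=
  fun f => ⟨_, substHom_rename_inl g f⟩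

lemma map_substHom_span_X_inr :
    (Ideal.span (Set.range fun w : Fin s =>
      (MvPolynomial.X (Sum.inr w) : MvPolynomial (Fin n ⊕ Fin s) K))).map (substHom g) =
      Ideal.span (Set.range g) := by
  rw [Ideal.map_span, ← Set.range_comp]
  simp only [Function.comp_def, substHom_X_inr]

lemma sub_rename_substHom_mem_liftIdeal (W : Ideal (MvPolynomial (Fin n) K))
    (f : MvPolynomial (Fin n ⊕ Fin s) K) :
    f - MvPolynomial.rename Sum.inl (substHom g f) ∈ liftIdeal g W := by
  let π := Ideal.Quotient.mkₐ K (liftIdeal g W)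
  have hπ : π = (π.comp (MvPolynomial.rename Sum.inl)).comp (substHom g) := by
    ext (v | w)
    · simp [substHom]
    · simp only [AlgHom.comp_apply, substHom_X_inr]
      exact Ideal.Quotient.eq.2 (Ideal.mem_sup_right (Ideal.subset_span ⟨w, rfl⟩))
  exact Ideal.Quotient.eq.1 (DFunLike.congr_fun hπ f)

lemma liftIdeal_eq_comap_substHom (W : Ideal (MvPolynomial (Fin n) K)) :
    liftIdeal g W = W.comap (substHom g) := by
  refine le_antisymm (sup_le (Ideal.map_le_iff_le_comap.2 fun f hf => ?_)
    (Ideal.span_le.2 ?_)) fun f hf => ?_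
  · change substHom g (MvPolynomial.rename Sum.inl f) ∈ W
    rwa [substHom_rename_inl]
  · rintro _ ⟨w, rfl⟩
    simp [substHom_rename_inl, substHom_X_inr]
  · have hren : MvPolynomial.rename Sum.inl (substHom g f) ∈ liftIdeal g W :=
      Ideal.mem_sup_left (Ideal.mem_map_of_mem (MvPolynomial.rename Sum.inl).toRingHom hf)
    simpa using add_mem (sub_rename_substHom_mem_liftIdeal g W f) hren

end SubstHom

theorem stmt_7_general {K ι κ : Type*} [CommRing K] [Fintype ι] [Fintype κ] {n s : ℕ}
    {lt : ((Fin n ⊕ Fin s) →₀ ℕ) → ((Fin n ⊕ Fin s) →₀ ℕ) → Prop}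
    (hctrl : IsControlOrder lt)
    (hloc : ∀ v : Fin n ⊕ Fin s, IsLocalVar lt v ↔ ∃ w : Fin s, v = Sum.inr w)
    {S' : Submonoid (MvPolynomial (Fin n ⊕ Fin s) K)}
    (hS' : (S' : Set (MvPolynomial (Fin n ⊕ Fin s) K)) = SDen K lt)
    {I J : Ideal (MvPolynomial (Fin n) K)}
    {g : Fin s → MvPolynomial (Fin n) K} (hJg : J = Ideal.span (Set.range g))
    {Qt : ι → Ideal (MvPolynomial (Fin n ⊕ Fin s) K)}
    (hdec : MinPrimDecOn (liftIdeal g I) Qt Finset.univ)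
    {Qd : κ → Ideal (MvPolynomial (Fin n) K)}
    (hI : I = ⨅ i ∈ Finset.univ, Qd i) (hQd : ∀ i ∈ Finset.univ, (Qd i).IsPrimary)
    {T : Ideal (MvPolynomial (Fin n ⊕ Fin s) K)}
    (hT : T = Ideal.span (Set.range fun w : Fin s =>
      (MvPolynomial.X (Sum.inr w) : MvPolynomial (Fin n ⊕ Fin s) K))) :
    extractionFrom J Qd Finset.univ =
        Ideal.map (substHom g)
          (((liftIdeal g I).map
              (algebraMap (MvPolynomial (Fin n ⊕ Fin s) K) (Localization S'))).comap
            (algebraMap (MvPolynomial (Fin n ⊕ Fin s) K) (Localization S'))) ∧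
      extractionFrom J Qd Finset.univ =
        (⨅ i ∈ Finset.univ.filter (fun i => Qt i ⊔ T ≠ ⊤), Ideal.map (substHom g) (Qt i)) ∧
      MinPrimDecOn (extractionFrom J Qd Finset.univ)
        (fun i => Ideal.map (substHom g) (Qt i))
        (Finset.univ.filter fun i => Qt i ⊔ T ≠ ⊤) := by
  have hφ := substHom_surjective g
  have hTJ : T.map (substHom g) = J := by rw [hT, hJg, map_substHom_span_X_inr]
  have hvars : {v | IsLocalVar lt v} = Set.range Sum.inr := by
    ext v
    simp [hloc, eq_comm]
  obtain rfl : S' = oneAddSubmonoid T := by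
    rw [hctrl.eq_oneAddSubmonoid hS', hvars, ← Set.range_comp, hT, Function.comp_def]
  rw [liftIdeal_eq_comap_substHom] at hdec ⊢
  obtain ⟨P, rfl⟩ : ∃ P : ι → Ideal _, Qt = fun i => (P i).comap (substHom g) :=
    ⟨_, funext fun i => (hdec.comap_map_eq_self hφ (Finset.mem_univ i)).symm⟩
  have hP : MinPrimDecOn I P Finset.univ := hdec.of_comap hφ
  rw [extractionFrom_eq_extractionFrom J hQd hP.2.1 (hI.symm.trans hP.1), hP.1,
    comap_map_localization_comap hφ T hP.2.1, hTJ]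
  refine ⟨(Ideal.map_comap_of_surjective _ hφ _).symm, ?_⟩
  simp only [Ideal.map_comap_of_surjective _ hφ, ne_eq, comap_sup_eq_top_iff hφ, hTJ]
  exact ⟨rfl, hP.mono (Finset.filter_subset _ _)⟩

/-- for a control order on `A' = K[x,t]` whose local variables are exactly the
`t`'s, the extraction `β(I,J)` equals `φ((S'⁻¹I')^c)`, equals the intersection of the images
`φ(Q̃ i)` over the components of `I'` with `Q̃ i + ⟨t₁,…,t_s⟩ ≠ A'`, and the latter is a
minimal primary decomposition of `β(I,J)` in `A`. -/
theorem stmt_7 {K : Type*} [Field K] {n s : ℕ}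
    (lt : ((Fin n ⊕ Fin s) →₀ ℕ) → ((Fin n ⊕ Fin s) →₀ ℕ) → Prop)
    (hctrl : IsControlOrder lt)
    (hloc : ∀ v : Fin n ⊕ Fin s, IsLocalVar lt v ↔ ∃ w : Fin s, v = Sum.inr w)
    (S' : Submonoid (MvPolynomial (Fin n ⊕ Fin s) K))
    (hS' : (S' : Set (MvPolynomial (Fin n ⊕ Fin s) K)) = SDen K lt)
    (I J : Ideal (MvPolynomial (Fin n) K)) (hI : I ≠ ⊤) (hJ : J ≠ ⊤)
    (g : Fin s → MvPolynomial (Fin n) K) (hJg : J = Ideal.span (Set.range g))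
    (k : ℕ) (Qt : Fin k → Ideal (MvPolynomial (Fin n ⊕ Fin s) K))
    (hdec : MinPrimDecOn (liftIdeal g I) Qt Finset.univ)
    (k' : ℕ) (Qd : Fin k' → Ideal (MvPolynomial (Fin n) K))
    (hQd : MinPrimDecOn I Qd Finset.univ)
    (T : Ideal (MvPolynomial (Fin n ⊕ Fin s) K))
    (hT : T = Ideal.span (Set.range fun w : Fin s =>
      (MvPolynomial.X (Sum.inr w) : MvPolynomial (Fin n ⊕ Fin s) K))) :
    extractionFrom J Qd Finset.univ =
        Ideal.map (substHom g)
          (((liftIdeal g I).map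
              (algebraMap (MvPolynomial (Fin n ⊕ Fin s) K) (Localization S'))).comap
            (algebraMap (MvPolynomial (Fin n ⊕ Fin s) K) (Localization S'))) ∧
      extractionFrom J Qd Finset.univ =
        (⨅ i ∈ Finset.univ.filter (fun i => Qt i ⊔ T ≠ ⊤), Ideal.map (substHom g) (Qt i)) ∧
      MinPrimDecOn (extractionFrom J Qd Finset.univ)
        (fun i => Ideal.map (substHom g) (Qt i))
        (Finset.univ.filter fun i => Qt i ⊔ T ≠ ⊤) := by
  exact stmt_7_general hctrl hloc hS' hJg hdec hQd.1 hQd.2.1 hT
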